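/- Let |Φ_1⟩ = (|00⟩ + |11⟩ + |22⟩)/√3 and |Φ_2⟩ = |01⟩ in ℂ³ ⊗ ℂ³, and let S = span{|Φ_1⟩, |Φ_2⟩}. Then no orthonormal basis of the 7-dimensional subspace S^⊥ (the orthogonal complement of S in ℂ³ ⊗ ℂ³) is perfectly distinguishable by separable operations. -/

import Mathlib

/-!
Identify vectors of `ℂ³ ⊗ ℂ³` with `3 × 3` matrices. A vector orthogonal to every `B k` lies in
`span {Φ₁, Φ₂}`, so its matrix is upper triangular with constant diagonal; if the matrix is a sum
of two rank-one matrices, its determinant vanishes, and with it the `Φ₁`-component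
(`phi1_comp_eq_zero`).

Write `M k = ∑ i, |v i⟩⟨v i|` with product vectors `v i`. The distinguishability equations say that
`v i` is orthogonal to `B j` for `j ≠ k`, whence `M k (B k) = (∑ j, M j) (B k) = B k`. Put
`c i = ⟨B k, v i⟩` and `a i = ⟨Φ₁, v i⟩`. The vector `c i • v j - c j • v i` is orthogonal to all of
`B` and is a sum of two product vectors, so `c i * a j = c j * a i`. Combined with
`∑ i, conj (c i) * a i = ⟨Φ₁, B k⟩ = 0` and `∑ i, |c i|² = 1` this forces `a = 0`, i.e.
`M k Φ₁ = 0`. Summing over `k` gives `Φ₁ = 0`, a contradiction.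
-/


open Matrix ComplexOrder

/-- A vector in `ℂ³ ⊗ ℂ³` (realized as functions on `Fin 3 × Fin 3`) is a
product vector if it factorizes. -/
def IsProdVec33 (v : Fin 3 × Fin 3 → ℂ) : Prop :=
  ∃ a b : Fin 3 → ℂ, v = fun p => a p.1 * b p.2

/-- The `3 × 3` coefficient matrix of a vector in `ℂ³ ⊗ ℂ³`; the Schmidt rank of
the vector is the rank of this matrix. -/
def coeffMat (v : Fin 3 × Fin 3 → ℂ) : Matrix (Fin 3) (Fin 3) ℂ :=
  Matrix.of fun i j => v (i, j)

/-- `|Φ₁⟩ = (|00⟩ + |11⟩ + |22⟩)/√3`. -/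
noncomputable def Phi1 : Fin 3 × Fin 3 → ℂ := fun p =>
  if p.1 = p.2 then ((1 / Real.sqrt 3 : ℝ) : ℂ) else 0

/-- `|Φ₂⟩ = |01⟩`. -/
def Phi2 : Fin 3 × Fin 3 → ℂ := fun p => if p = (0, 1) then 1 else 0

/-- The rank-one operator `|v⟩⟨v|`. -/
def ketBra {ι : Type} (v : ι → ℂ) : Matrix ι ι ℂ :=
  Matrix.vecMulVec v (star v)

/-- An operator on `ℂ³ ⊗ ℂ³` is separable if it is a finite sum of rank-one
operators `|a⟩⟨a|` with each `a` a product vector (zero counts as separable). -/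
def SepOp33 (E : Matrix (Fin 3 × Fin 3) (Fin 3 × Fin 3) ℂ) : Prop :=
  ∃ (n : ℕ) (v : Fin n → Fin 3 × Fin 3 → ℂ),
    (∀ i, IsProdVec33 (v i)) ∧ E = ∑ i, ketBra (v i)

/-- Perfect distinguishability of states on `ℂ³ ⊗ ℂ³` by separable operations. -/
def PerfDistSep33 {n : ℕ}
    (ρ : Fin n → Matrix (Fin 3 × Fin 3) (Fin 3 × Fin 3) ℂ) : Prop :=
  ∃ M : Fin n → Matrix (Fin 3 × Fin 3) (Fin 3 × Fin 3) ℂ,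
    (∀ k, (M k).PosSemidef) ∧ (∀ k, SepOp33 (M k)) ∧
    (∑ k, M k) = 1 ∧
    ∀ k j, (M k * ρ j).trace = if k = j then 1 else 0

lemma ketBra_mulVec {ι : Type} [Fintype ι] (v x : ι → ℂ) :
    ketBra v *ᵥ x = (star v ⬝ᵥ x) • v := by
  ext i
  simp [ketBra, vecMulVec_mulVec, mul_comm]

lemma trace_mul_ketBra {ι : Type} [Fintype ι] (M : Matrix ι ι ℂ) (b : ι → ℂ) :
    (M * ketBra b).trace = star b ⬝ᵥ (M *ᵥ b) := by
  rw [ketBra, mul_vecMulVec, trace_vecMulVec, dotProduct_comm]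

lemma star_dot_comm {ι : Type} [Fintype ι] (u v : ι → ℂ) :
    star u ⬝ᵥ v = star (star v ⬝ᵥ u) := by
  simp only [dotProduct, Pi.star_apply, star_sum, star_mul', star_star, mul_comm]

lemma phi1_phi1 : star Phi1 ⬝ᵥ Phi1 = 1 := by
  have h : ((Real.sqrt 3 : ℝ) : ℂ) * ((Real.sqrt 3 : ℝ) : ℂ) = 3 := by
    rw [← Complex.ofReal_mul, Real.mul_self_sqrt (by norm_num)]; norm_num
  have h0 : ((Real.sqrt 3 : ℝ) : ℂ) ≠ 0 := by
    intro h0; rw [h0] at h; norm_num at h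
  simp only [dotProduct, Fintype.sum_prod_type, Fin.sum_univ_three, Phi1, Pi.star_apply]
  simp
  field_simp
  linear_combination -h

lemma phi1_phi2 : star Phi1 ⬝ᵥ Phi2 = 0 := by
  simp [dotProduct, Phi1, Phi2]

lemma phi2_phi2 : star Phi2 ⬝ᵥ Phi2 = 1 := by
  simp [dotProduct, Phi2]

/-- Nine orthonormal vectors in a nine-dimensional space: what is orthogonal to all `B i` is a
combination of `Φ₁` and `Φ₂`. -/
lemma mem_span_phi (B : Fin 7 → Fin 3 × Fin 3 → ℂ)
    (hB : ∀ i j, star (B i) ⬝ᵥ B j = if i = j then 1 else 0)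
    (h1 : ∀ i, star Phi1 ⬝ᵥ B i = 0) (h2 : ∀ i, star Phi2 ⬝ᵥ B i = 0)
    (w : Fin 3 × Fin 3 → ℂ) (hw : ∀ i, star (B i) ⬝ᵥ w = 0) :
    w = (star Phi1 ⬝ᵥ w) • Phi1 + (star Phi2 ⬝ᵥ w) • Phi2 := by
  let f : Fin 7 ⊕ Fin 2 → Fin 3 × Fin 3 → ℂ := Sum.elim B ![Phi1, Phi2]
  let Q : Matrix (Fin 3 × Fin 3) (Fin 7 ⊕ Fin 2) ℂ := Matrix.of fun p s => f s p
  have h1' : ∀ i, star (B i) ⬝ᵥ Phi1 = 0 := fun i => by rw [star_dot_comm, h1, star_zero]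
  have h2' : ∀ i, star (B i) ⬝ᵥ Phi2 = 0 := fun i => by rw [star_dot_comm, h2, star_zero]
  have h21 : star Phi2 ⬝ᵥ Phi1 = 0 := by rw [star_dot_comm, phi1_phi2, star_zero]
  have hQ : Qᴴ * Q = 1 := by
    ext s t
    have : (Qᴴ * Q) s t = star (f s) ⬝ᵥ f t := rfl
    rw [this]
    rcases s with s | s <;> rcases t with t | t
    · simp [f, hB, Matrix.one_apply]
    · fin_cases t <;> simp [f, h1', h2']
    · fin_cases s <;> simp [f, h1, h2]
    · fin_cases s <;> fin_cases t <;> simp [f, phi1_phi1, phi1_phi2, phi2_phi2, h21]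
  have hQ' : Q * Qᴴ = 1 := (mul_eq_one_comm_of_card_eq _ _ _ (by simp)).1 hQ
  have key : Q *ᵥ (Qᴴ *ᵥ w) = w := by rw [mulVec_mulVec, hQ', one_mulVec]
  have hexp : (Q *ᵥ (Qᴴ *ᵥ w)) = fun p => ∑ s, f s p * (star (f s) ⬝ᵥ w) := rfl
  ext p
  rw [← congrFun key p, hexp]
  simp [f, hw, mul_comm]

/-- A sum of two product vectors orthogonal to all `B i` has no `Φ₁`-component, because its
`3 × 3` coefficient matrix is singular. -/
lemma phi1_comp_eq_zero (B : Fin 7 → Fin 3 × Fin 3 → ℂ)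
    (hB : ∀ i j, star (B i) ⬝ᵥ B j = if i = j then 1 else 0)
    (h1 : ∀ i, star Phi1 ⬝ᵥ B i = 0) (h2 : ∀ i, star Phi2 ⬝ᵥ B i = 0)
    (u v : Fin 3 × Fin 3 → ℂ) (hu : IsProdVec33 u) (hv : IsProdVec33 v) (c d : ℂ)
    (hw : ∀ i, star (B i) ⬝ᵥ (c • u - d • v) = 0) :
    star Phi1 ⬝ᵥ (c • u - d • v) = 0 := by
  obtain ⟨p, q, rfl⟩ := hu
  obtain ⟨r, s, rfl⟩ := hv
  have h := mem_span_phi B hB h1 h2 _ hw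
  generalize star Phi1 ⬝ᵥ _ = x at h ⊢
  generalize star Phi2 ⬝ᵥ _ = y at h
  have hd : (coeffMat (x • Phi1 + y • Phi2)).det = 0 := by
    rw [← h, det_fin_three]
    simp [coeffMat]
    ring
  rw [det_fin_three] at hd
  simpa [coeffMat, Phi1, Phi2] using hd

/-- **Theorem 7.** No orthonormal basis of the `7`-dimensional subspace
`S^⊥ = span{|Φ₁⟩, |Φ₂⟩}^⊥ ⊆ ℂ³ ⊗ ℂ³` is perfectly distinguishable by separable
operations. -/
theorem dim_seven_indistinguishable_subspace :
    ¬ ∃ B : Fin 7 → Fin 3 × Fin 3 → ℂ,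
      (∀ i j, star (B i) ⬝ᵥ B j = if i = j then 1 else 0) ∧
      (∀ i, star Phi1 ⬝ᵥ B i = 0) ∧
      (∀ i, star Phi2 ⬝ᵥ B i = 0) ∧
      PerfDistSep33 (fun k => ketBra (B k)) := by
  rintro ⟨B, hB, h1, h2, M, -, hsep, hsum, htr⟩
  choose n v hprod hM using hsep
  have hMv : ∀ k x, M k *ᵥ x = ∑ i, (star (v k i) ⬝ᵥ x) • v k i := by
    intro k x
    rw [hM, sum_mulVec]
    simp only [ketBra_mulVec]
  have hq : ∀ k j, ∑ i, star (star (B j) ⬝ᵥ v k i) * (star (B j) ⬝ᵥ v k i)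
      = if k = j then 1 else 0 := by
    intro k j
    rw [← htr k j, trace_mul_ketBra, hMv, dotProduct_sum]
    refine Finset.sum_congr rfl fun i _ => ?_
    rw [dotProduct_smul, ← star_dot_comm, smul_eq_mul]
  have horth : ∀ k j, k ≠ j → ∀ i, star (B j) ⬝ᵥ v k i = 0 := by
    intro k j hkj i
    have h := hq k j
    rw [if_neg hkj, Finset.sum_eq_zero_iff_of_nonneg (fun i _ => star_mul_self_nonneg _)] at h
    simpa using h i (Finset.mem_univ i)
  have hMB : ∀ k, M k *ᵥ B k = B k := by
    intro k
    have h : ∑ j, M j *ᵥ B k = B k := by rw [← sum_mulVec, hsum, one_mulVec]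
    rwa [Finset.sum_eq_single k (fun j _ hj => ?_) (by simp)] at h
    rw [hMv]
    refine Finset.sum_eq_zero fun i _ => ?_
    rw [star_dot_comm, horth j k hj i, star_zero, zero_smul]
  have hzero : ∀ k i, star Phi1 ⬝ᵥ v k i = 0 := by
    intro k i
    have hcross : ∀ j, (star (B k) ⬝ᵥ v k i) * (star Phi1 ⬝ᵥ v k j)
        = (star (B k) ⬝ᵥ v k j) * (star Phi1 ⬝ᵥ v k i) := by
      intro j
      have h := phi1_comp_eq_zero B hB h1 h2 (v k j) (v k i) (hprod k j) (hprod k i)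
        (star (B k) ⬝ᵥ v k i) (star (B k) ⬝ᵥ v k j) fun l => by
          rw [dotProduct_sub, dotProduct_smul, dotProduct_smul]
          by_cases hl : k = l
          · subst hl; simp only [smul_eq_mul]; ring
          · simp [horth k l hl]
      rw [dotProduct_sub, dotProduct_smul, dotProduct_smul] at h
      simpa [sub_eq_zero] using h
    have hs : ∑ j, star (star (B k) ⬝ᵥ v k j) * (star Phi1 ⬝ᵥ v k j) = 0 := by
      rw [← h1 k]
      conv_rhs => rw [← hMB k]
      rw [hMv, dotProduct_sum]
      refine Finset.sum_congr rfl fun j _ => ?_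
      rw [dotProduct_smul, ← star_dot_comm, smul_eq_mul]
    calc star Phi1 ⬝ᵥ v k i
        = (∑ j, star (star (B k) ⬝ᵥ v k j) * (star (B k) ⬝ᵥ v k j)) * (star Phi1 ⬝ᵥ v k i) := by
          rw [hq, if_pos rfl, one_mul]
      _ = (star (B k) ⬝ᵥ v k i)
            * ∑ j, star (star (B k) ⬝ᵥ v k j) * (star Phi1 ⬝ᵥ v k j) := by
          rw [Finset.sum_mul, Finset.mul_sum]
          refine Finset.sum_congr rfl fun j _ => ?_
          linear_combination (-star (star (B k) ⬝ᵥ v k j)) * hcross j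
      _ = 0 := by rw [hs, mul_zero]
  have hfin : (∑ k, M k) *ᵥ Phi1 = 0 := by
    rw [sum_mulVec]
    refine Finset.sum_eq_zero fun k _ => ?_
    rw [hMv]
    refine Finset.sum_eq_zero fun i _ => ?_
    rw [star_dot_comm, hzero, star_zero, zero_smul]
  rw [hsum, one_mulVec] at hfin
  have h := phi1_phi1
  rw [hfin] at h
  simp at h
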